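/- Let Γ be a countable discrete group, N a finite normal subgroup of cardinality n, and μ a finitely supported, generating, transient probability measure on Γ with Green function G. Then the function y ↦ ∑_{g∈N} G(y·g)/G(y) tends to n along the cofinite filter on Γ, i.e. ∑_{g∈N} G(y·g)/G(y) − n vanishes at infinity. -/

import Mathlib

/-- Convolution of two (signed) measures on a discrete group:
`(μ ∗ ν)(x) = ∑_y μ(y) ν(y⁻¹ x)`. -/
noncomputable def conv {G : Type*} [Group G] (μ ν : G → ℝ) : G → ℝ :=
  fun x => ∑' y, μ y * ν (y⁻¹ * x)

/-- Convolution powers: `μ^{*0} = δ_e`, `μ^{*(n+1)} = μ^{*n} ∗ μ`. -/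
noncomputable def convPow {G : Type*} [Group G] (μ : G → ℝ) : ℕ → G → ℝ
  | 0 => Set.indicator ({1} : Set G) (fun _ => (1 : ℝ))
  | n + 1 => conv (convPow μ n) μ

/-- A measure `μ` is generating if every point gets positive mass from some
convolution power `μ^{*n}`, `n ≥ 1`. -/
def IsGenerating {G : Type*} [Group G] (μ : G → ℝ) : Prop :=
  ∀ x : G, ∃ n : ℕ, 1 ≤ n ∧ 0 < convPow μ n x

/-- A measure `μ` is transient if its Green function `∑_n μ^{*n}(x)` is finite
(i.e. the series is summable) at every point. -/
def IsTransient {G : Type*} [Group G] (μ : G → ℝ) : Prop :=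
  ∀ x : G, Summable fun n => convPow μ n x

/-- The Green function `G(x) = ∑_{n ≥ 0} μ^{*n}(x)`. -/
noncomputable def greenFn {G : Type*} [Group G] (μ : G → ℝ) : G → ℝ :=
  fun x => ∑' n, convPow μ n x

/-- The Martin kernel `K(x, y) = G(y x⁻¹) / G(y)`. -/
noncomputable def martinKernel {G : Type*} [Group G] (μ : G → ℝ) (x y : G) : ℝ :=
  greenFn μ (y * x⁻¹) / greenFn μ y

/-- The pushforward of a measure `μ` on `Γ` to the quotient group `Γ/N`:
`μ̄(c) = ∑_{x : π(x) = c} μ(x)`. -/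
noncomputable def pushforward {Γ : Type*} [Group Γ] (N : Subgroup Γ) [N.Normal]
    (μ : Γ → ℝ) : Γ ⧸ N → ℝ :=
  fun c => ∑' x : {x : Γ // (QuotientGroup.mk x : Γ ⧸ N) = c}, μ x

/-!
Let `K x y = G(y x⁻¹) / G(y)` be the Martin kernel. As a function of `x` it is superharmonic, and
harmonic away from `x = y`; the Harnack inequality confines these functions to a compact set.
Hence every limit of `K · y` as `y → ∞` is a nonnegative harmonic function `f` with `f 1 = 1`, and
it suffices to show that `f = 1` on `N`.

For this, maximize `h g` over all `g ∈ N` and all nonnegative harmonic `h` with `h 1 = 1`, and let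
the maximum `M` be attained at `F` and `g₀`. Writing `x g = (x g x⁻¹) x` with `x g x⁻¹ ∈ N`, and
normalizing the right translate of `h` by `x`, one gets `h (x g) ≤ M * h x` for all `x` and all
nonnegative harmonic `h`. So `M * F x - F (x g₀)` is nonnegative and harmonic and vanishes at `1`,
hence vanishes identically by the minimum principle. Thus `F (g₀ ^ k) = M ^ k`, and `M = 1` because
`g₀` has finite order. Now `h (x g) ≤ h x` for all `g ∈ N`; applied to `g⁻¹` as well, this is an
equality.
-/

/-- Nonnegative superharmonic functions of the left random walk that moves `x` to `s * x` with
weight `μ s`. The inequality `∑ₛ μ(s) f(sx) ≤ f(x)` is imposed on finite partial sums, so that it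
needs no summability and passes to pointwise limits. -/
structure IsNonnegSuperharmonic {Γ : Type*} [Group Γ] (μ f : Γ → ℝ) : Prop where
  nonneg : ∀ x, 0 ≤ f x
  sum_le : ∀ (T : Finset Γ) (x : Γ), ∑ s ∈ T, μ s * f (s * x) ≤ f x

/-- Nonnegative harmonic functions of the left random walk that moves `x` to `s * x` with
weight `μ s`. -/
structure IsNonnegHarmonic {Γ : Type*} [Group Γ] (μ f : Γ → ℝ) : Prop where
  nonneg : ∀ x, 0 ≤ f x
  hasSum : ∀ x, HasSum (fun s => μ s * f (s * x)) (f x)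

/-- The nonnegative harmonic functions normalized at the identity; they form the base of the cone
of all nonnegative harmonic functions. -/
def normalizedHarmonic {Γ : Type*} [Group Γ] (μ : Γ → ℝ) : Set (Γ → ℝ) :=
  {f | IsNonnegHarmonic μ f ∧ f 1 = 1}

theorem hasSum_mul_iff_of_finite_support {ι R : Type*} [NonUnitalNonAssocSemiring R]
    [TopologicalSpace R] [T2Space R] {μ : ι → R} (hfin : (Function.support μ).Finite)
    {φ : ι → R} {a : R} :
    HasSum (fun s => μ s * φ s) a ↔ ∑ s ∈ hfin.toFinset, μ s * φ s = a := by
  have hsum : HasSum (fun s => μ s * φ s) (∑ s ∈ hfin.toFinset, μ s * φ s) :=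
    hasSum_sum_of_ne_finset_zero fun s hs => by
      rw [Function.notMem_support.1 (mt hfin.mem_toFinset.2 hs), zero_mul]
  exact ⟨hsum.unique, fun h => h ▸ hsum⟩

theorem exists_forall_apply_le_of_isCompact {ι α : Type*} [LinearOrder α] [TopologicalSpace α]
    [ClosedIciTopology α] {K : Set (ι → α)} (hK : IsCompact K) (hKne : K.Nonempty) {S : Set ι}
    (hS : S.Finite) (hSne : S.Nonempty) :
    ∃ f ∈ K, ∃ i ∈ S, ∀ h ∈ K, ∀ j ∈ S, h j ≤ f i := by
  have hmax (i : ι) : ∃ f ∈ K, ∀ h ∈ K, h i ≤ f i :=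
    hK.exists_isMaxOn hKne (continuous_apply i).continuousOn
  choose F hFmem hFmax using hmax
  obtain ⟨i, hi, hle⟩ := S.exists_max_image (fun i => F i i) hS hSne
  exact ⟨F i, hFmem i, i, hi, fun h hh j hj => (hFmax j h hh).trans (hle j hj)⟩

theorem apply_eq_one_of_isOfFinOrder {M R : Type*} [Monoid M] [Semiring R] [LinearOrder R]
    [IsStrictOrderedRing R] {f : M → R} {g : M} (hg : IsOfFinOrder g) (hf : 0 ≤ f g)
    (hf1 : f 1 = 1) (hmul : ∀ x, f (x * g) = f g * f x) : f g = 1 := by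
  have hpow (k : ℕ) : f (g ^ k) = f g ^ k := by
    induction k with
    | zero => rw [pow_zero, pow_zero, hf1]
    | succ k ih => rw [pow_succ, hmul, ih, pow_succ']
  obtain ⟨k, hk, hgk⟩ := isOfFinOrder_iff_pow_eq_one.1 hg
  rw [← pow_eq_one_iff_of_nonneg hf hk.ne', ← hpow, hgk, hf1]

section

open Filter Topology

variable {Γ : Type*} [Group Γ] {μ f : Γ → ℝ}

theorem convPow_nonneg (hμ : ∀ x, 0 ≤ μ x) (n : ℕ) (x : Γ) : 0 ≤ convPow μ n x := by
  induction n generalizing x with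
  | zero => exact Set.indicator_nonneg (fun _ _ => zero_le_one) x
  | succ n ih => exact tsum_nonneg fun y => mul_nonneg (ih y) (hμ _)

theorem convPow_zero_of_ne_one {x : Γ} (hx : x ≠ 1) : convPow μ 0 x = 0 :=
  Set.indicator_of_notMem (Set.mem_singleton_iff.not.2 hx) _

theorem convPow_succ_eq_tsum (n : ℕ) (z : Γ) :
    convPow μ (n + 1) z = ∑' s, μ s * convPow μ n (z * s⁻¹) := by
  calc convPow μ (n + 1) z = ∑' y, convPow μ n y * μ (y⁻¹ * z) := rfl
    _ = ∑' s, convPow μ n (z * s⁻¹) * μ ((z * s⁻¹)⁻¹ * z) :=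
      (((Equiv.inv Γ).trans (Equiv.mulLeft z)).tsum_eq _).symm
    _ = ∑' s, μ s * convPow μ n (z * s⁻¹) :=
      tsum_congr fun s => by rw [mul_inv_rev, inv_inv, inv_mul_cancel_right, mul_comm]

theorem greenFn_nonneg (hμ : ∀ x, 0 ≤ μ x) (x : Γ) : 0 ≤ greenFn μ x :=
  tsum_nonneg fun n => convPow_nonneg hμ n x

theorem greenFn_pos (hμ : ∀ x, 0 ≤ μ x) (hgen : IsGenerating μ) (htrans : IsTransient μ)
    (x : Γ) : 0 < greenFn μ x := by
  obtain ⟨n, -, hn⟩ := hgen x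
  exact (htrans x).tsum_pos (fun i => convPow_nonneg hμ i x) n hn

theorem hasSum_mul_greenFn (hfin : (Function.support μ).Finite) (htrans : IsTransient μ)
    (z : Γ) :
    HasSum (fun s => μ s * greenFn μ (z * s⁻¹)) (greenFn μ z - convPow μ 0 z) := by
  have hstep (n : ℕ) :
      ∑ s ∈ hfin.toFinset, μ s * convPow μ n (z * s⁻¹) = convPow μ (n + 1) z := by
    rw [convPow_succ_eq_tsum]
    exact ((hasSum_mul_iff_of_finite_support hfin).2 rfl).tsum_eq.symm
  have hterms : HasSum (fun n => convPow μ (n + 1) z)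
      (∑ s ∈ hfin.toFinset, μ s * greenFn μ (z * s⁻¹)) := by
    simp_rw [← hstep]
    exact hasSum_sum fun s _ => (htrans _).hasSum.mul_left _
  rw [hasSum_mul_iff_of_finite_support hfin, ← hterms.tsum_eq, eq_sub_iff_add_eq']
  exact (htrans z).tsum_eq_zero_add.symm

theorem IsNonnegSuperharmonic.apply_mul_le (hf : IsNonnegSuperharmonic μ f) {s : Γ}
    (hs : 0 < μ s) (x : Γ) : f (s * x) ≤ (μ s)⁻¹ * f x := by
  rw [le_inv_mul_iff₀ hs]
  simpa only [Finset.sum_singleton] using hf.sum_le {s} x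

theorem exists_harnack_of_convPow_pos (hμ : ∀ x, 0 ≤ μ x) {n : ℕ} {s : Γ}
    (hs : 0 < convPow μ n s) :
    ∃ C : ℝ, 0 ≤ C ∧ ∀ f, IsNonnegSuperharmonic μ f → ∀ x, f (s * x) ≤ C * f x := by
  induction n generalizing s with
  | zero =>
    obtain rfl : s = 1 := by
      by_contra hne
      exact hs.ne' (convPow_zero_of_ne_one hne)
    exact ⟨1, zero_le_one, fun f _ x => by rw [one_mul, one_mul]⟩
  | succ n ih =>
    obtain ⟨t, ht⟩ : ∃ t, μ t * convPow μ n (s * t⁻¹) ≠ 0 := by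
      by_contra! h
      rw [convPow_succ_eq_tsum] at hs
      simp only [h, tsum_zero, lt_self_iff_false] at hs
    have hμt : 0 < μ t := (hμ t).lt_of_ne' (left_ne_zero_of_mul ht)
    obtain ⟨C, hC, hCf⟩ :=
      ih ((convPow_nonneg hμ n _).lt_of_ne' (right_ne_zero_of_mul ht))
    refine ⟨C * (μ t)⁻¹, mul_nonneg hC (inv_nonneg.2 hμt.le), fun f hf x => ?_⟩
    calc f (s * x) = f (s * t⁻¹ * (t * x)) := by rw [mul_assoc, inv_mul_cancel_left]
      _ ≤ C * f (t * x) := hCf f hf _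
      _ ≤ C * ((μ t)⁻¹ * f x) := mul_le_mul_of_nonneg_left (hf.apply_mul_le hμt x) hC
      _ = C * (μ t)⁻¹ * f x := (mul_assoc _ _ _).symm

theorem IsGenerating.exists_harnack (hgen : IsGenerating μ) (hμ : ∀ x, 0 ≤ μ x) :
    ∃ C : Γ → ℝ, ∀ f, IsNonnegSuperharmonic μ f → ∀ s x, f (s * x) ≤ C s * f x := by
  have (s : Γ) : ∃ C : ℝ, ∀ f, IsNonnegSuperharmonic μ f → ∀ x, f (s * x) ≤ C * f x := by
    obtain ⟨n, -, hn⟩ := hgen s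
    obtain ⟨C, -, hC⟩ := exists_harnack_of_convPow_pos hμ hn
    exact ⟨C, hC⟩
  choose C hC using this
  exact ⟨C, fun f hf s x => hC s f hf x⟩

theorem IsNonnegSuperharmonic.eq_zero_of_apply_eq_zero (hf : IsNonnegSuperharmonic μ f)
    (hμ : ∀ x, 0 ≤ μ x) (hgen : IsGenerating μ) {x₀ : Γ} (hx₀ : f x₀ = 0) : f = 0 := by
  obtain ⟨C, hC⟩ := hgen.exists_harnack hμ
  funext x
  refine (?_ : f x ≤ 0).antisymm (hf.nonneg x)
  simpa only [inv_mul_cancel_right, hx₀, mul_zero] using hC f hf (x * x₀⁻¹) x₀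

theorem isClosed_setOf_isNonnegSuperharmonic :
    IsClosed {f : Γ → ℝ | IsNonnegSuperharmonic μ f} := by
  have heq : {f : Γ → ℝ | IsNonnegSuperharmonic μ f} = (⋂ x, {f | 0 ≤ f x}) ∩
      ⋂ T : Finset Γ, ⋂ x, {f | ∑ s ∈ T, μ s * f (s * x) ≤ f x} := by
    ext f
    simp only [Set.mem_inter_iff, Set.mem_iInter, Set.mem_ofPred_eq]
    exact ⟨fun h => ⟨h.nonneg, h.sum_le⟩, fun h => ⟨h.1, h.2⟩⟩
  rw [heq]
  exact (isClosed_iInter fun x => isClosed_le (by fun_prop) (by fun_prop)).inter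
    (isClosed_iInter fun T => isClosed_iInter fun x => isClosed_le (by fun_prop) (by fun_prop))

theorem isCompact_setOf_isNonnegSuperharmonic_one (hμ : ∀ x, 0 ≤ μ x)
    (hgen : IsGenerating μ) : IsCompact {f : Γ → ℝ | IsNonnegSuperharmonic μ f ∧ f 1 = 1} := by
  obtain ⟨C, hC⟩ := hgen.exists_harnack hμ
  refine (isCompact_univ_pi fun x => isCompact_Icc (a := 0) (b := C x)).of_isClosed_subset
    (isClosed_setOf_isNonnegSuperharmonic.inter
      (isClosed_eq (continuous_apply 1) continuous_const)) ?_
  rintro f ⟨hf, hf1⟩ x -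
  refine ⟨hf.nonneg x, ?_⟩
  simpa only [mul_one, hf1] using hC f hf x 1

theorem IsNonnegHarmonic.isNonnegSuperharmonic (hf : IsNonnegHarmonic μ f)
    (hμ : ∀ x, 0 ≤ μ x) : IsNonnegSuperharmonic μ f where
  nonneg := hf.nonneg
  sum_le T x := sum_le_hasSum T (fun s _ => mul_nonneg (hμ s) (hf.nonneg _)) (hf.hasSum x)

theorem isCompact_normalizedHarmonic (hμ : ∀ x, 0 ≤ μ x)
    (hfin : (Function.support μ).Finite) (hgen : IsGenerating μ) :
    IsCompact (normalizedHarmonic μ) := by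
  have heq : normalizedHarmonic μ = {f | IsNonnegSuperharmonic μ f ∧ f 1 = 1} ∩
      ⋂ x, {f | ∑ s ∈ hfin.toFinset, μ s * f (s * x) = f x} := by
    ext f
    simp only [Set.mem_inter_iff, Set.mem_iInter, Set.mem_ofPred_eq,
      ← hasSum_mul_iff_of_finite_support hfin]
    exact ⟨fun h => ⟨⟨h.1.isNonnegSuperharmonic hμ, h.2⟩, h.1.hasSum⟩,
      fun h => ⟨⟨h.1.1.nonneg, h.2⟩, h.1.2⟩⟩
  rw [heq]
  exact (isCompact_setOf_isNonnegSuperharmonic_one hμ hgen).inter_right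
    (isClosed_iInter fun x => isClosed_eq (by fun_prop) (by fun_prop))

theorem IsNonnegHarmonic.comp_mul_right (hf : IsNonnegHarmonic μ f) (g : Γ) :
    IsNonnegHarmonic μ fun x => f (x * g) where
  nonneg x := hf.nonneg (x * g)
  hasSum x := by simpa only [mul_assoc] using hf.hasSum (x * g)

theorem IsNonnegHarmonic.div_const (hf : IsNonnegHarmonic μ f) {c : ℝ} (hc : 0 ≤ c) :
    IsNonnegHarmonic μ fun x => f x / c where
  nonneg x := div_nonneg (hf.nonneg x) hc
  hasSum x := by simpa only [mul_div_assoc] using (hf.hasSum x).div_const c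

theorem IsNonnegHarmonic.const_mul_sub {f' : Γ → ℝ} (hf : IsNonnegHarmonic μ f)
    (hf' : IsNonnegHarmonic μ f') {c : ℝ} (hle : ∀ x, f' x ≤ c * f x) :
    IsNonnegHarmonic μ fun x => c * f x - f' x where
  nonneg x := sub_nonneg.2 (hle x)
  hasSum x := by
    simpa only [mul_sub, mul_left_comm] using ((hf.hasSum x).mul_left c).sub (hf'.hasSum x)

theorem IsNonnegHarmonic.apply_mul_mem_le {N : Subgroup Γ} [N.Normal]
    (hf : IsNonnegHarmonic μ f) (hμ : ∀ x, 0 ≤ μ x) (hgen : IsGenerating μ) {M : ℝ}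
    (hM : ∀ h ∈ normalizedHarmonic μ, ∀ g ∈ N, h g ≤ M) (x : Γ) {g : Γ} (hg : g ∈ N) :
    f (x * g) ≤ M * f x := by
  rcases (hf.nonneg x).eq_or_lt' with hx | hx
  · simp [(hf.isNonnegSuperharmonic hμ).eq_zero_of_apply_eq_zero hμ hgen hx]
  · have hmem : (fun z => f (z * x) / f x) ∈ normalizedHarmonic μ :=
      ⟨(hf.comp_mul_right x).div_const hx.le, by simp only [one_mul, div_self hx.ne']⟩
    have := hM _ hmem (x * g * x⁻¹) (Subgroup.Normal.conj_mem ‹_› g hg x)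
    rwa [inv_mul_cancel_right, div_le_iff₀ hx] at this

theorem apply_mem_le_one_of_mem_normalizedHarmonic {N : Subgroup Γ} [N.Normal] [Finite N]
    (hμ : ∀ x, 0 ≤ μ x) (hfin : (Function.support μ).Finite) (hgen : IsGenerating μ)
    (hf : f ∈ normalizedHarmonic μ) {g : Γ} (hg : g ∈ N) : f g ≤ 1 := by
  obtain ⟨F, ⟨hF, hF1⟩, g₀, hg₀, hmax⟩ := exists_forall_apply_le_of_isCompact
    (isCompact_normalizedHarmonic hμ hfin hgen) ⟨f, hf⟩ (Set.toFinite (N : Set Γ)) ⟨1, N.one_mem⟩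
  have hdiff : IsNonnegHarmonic μ fun x => F g₀ * F x - F (x * g₀) :=
    hF.const_mul_sub (hF.comp_mul_right g₀)
      fun x => hF.apply_mul_mem_le hμ hgen hmax x hg₀
  have hzero : (fun x => F g₀ * F x - F (x * g₀)) = 0 :=
    (hdiff.isNonnegSuperharmonic hμ).eq_zero_of_apply_eq_zero hμ hgen (x₀ := 1)
      (by simp only [hF1, mul_one, one_mul, sub_self])
  have hmul (x : Γ) : F (x * g₀) = F g₀ * F x := (sub_eq_zero.1 (congrFun hzero x)).symm
  have hord : IsOfFinOrder g₀ :=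
    N.subtype.isOfFinOrder (isOfFinOrder_of_finite (⟨g₀, hg₀⟩ : N))
  exact (hmax f hf g hg).trans_eq (apply_eq_one_of_isOfFinOrder hord (hF.nonneg g₀) hF1 hmul)

theorem IsNonnegHarmonic.apply_mul_mem {N : Subgroup Γ} [N.Normal] [Finite N]
    (hf : IsNonnegHarmonic μ f) (hμ : ∀ x, 0 ≤ μ x) (hfin : (Function.support μ).Finite)
    (hgen : IsGenerating μ) (x : Γ) {g : Γ} (hg : g ∈ N) : f (x * g) = f x := by
  have hle (y : Γ) {k : Γ} (hk : k ∈ N) : f (y * k) ≤ f y := by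
    simpa only [one_mul] using hf.apply_mul_mem_le hμ hgen
      (fun _ hh _ => apply_mem_le_one_of_mem_normalizedHarmonic hμ hfin hgen hh) y hk
  refine (hle x hg).antisymm ?_
  simpa only [mul_inv_cancel_right] using hle (x * g) (N.inv_mem hg)

theorem hasSum_mul_martinKernel (hfin : (Function.support μ).Finite) (htrans : IsTransient μ)
    (x y : Γ) :
    HasSum (fun s => μ s * martinKernel μ (s * x) y)
      (martinKernel μ x y - convPow μ 0 (y * x⁻¹) / greenFn μ y) := by
  simpa only [martinKernel, mul_inv_rev, mul_assoc, mul_div_assoc, sub_div] using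
    (hasSum_mul_greenFn hfin htrans (y * x⁻¹)).div_const (greenFn μ y)

theorem isNonnegSuperharmonic_martinKernel (hμ : ∀ x, 0 ≤ μ x)
    (hfin : (Function.support μ).Finite) (htrans : IsTransient μ) (y : Γ) :
    IsNonnegSuperharmonic μ fun x => martinKernel μ x y := by
  have hnonneg (x : Γ) : 0 ≤ martinKernel μ x y :=
    div_nonneg (greenFn_nonneg hμ _) (greenFn_nonneg hμ _)
  refine ⟨hnonneg, fun T x => ?_⟩
  calc ∑ s ∈ T, μ s * martinKernel μ (s * x) y
      ≤ martinKernel μ x y - convPow μ 0 (y * x⁻¹) / greenFn μ y :=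
        sum_le_hasSum T (fun s _ => mul_nonneg (hμ s) (hnonneg _))
          (hasSum_mul_martinKernel hfin htrans x y)
    _ ≤ martinKernel μ x y :=
        sub_le_self _ (div_nonneg (convPow_nonneg hμ 0 _) (greenFn_nonneg hμ y))

theorem isNonnegHarmonic_of_tendsto_martinKernel (hμ : ∀ x, 0 ≤ μ x)
    (hfin : (Function.support μ).Finite) (htrans : IsTransient μ)
    {l : Filter Γ} [l.NeBot] (hl : l ≤ cofinite)
    (hf : Tendsto (fun y x => martinKernel μ x y) l (𝓝 f)) : IsNonnegHarmonic μ f := by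
  rw [tendsto_pi_nhds] at hf
  refine ⟨fun x => ge_of_tendsto' (hf x) fun y =>
    (isNonnegSuperharmonic_martinKernel hμ hfin htrans y).nonneg x, fun x => ?_⟩
  rw [hasSum_mul_iff_of_finite_support hfin]
  have hsum : Tendsto (fun y => ∑ s ∈ hfin.toFinset, μ s * martinKernel μ (s * x) y) l
      (𝓝 (∑ s ∈ hfin.toFinset, μ s * f (s * x))) :=
    tendsto_finsetSum _ fun s _ => (hf (s * x)).const_mul _
  refine tendsto_nhds_unique (hsum.congr' ?_) (hf x)
  filter_upwards [hl (Set.finite_singleton x).compl_mem_cofinite] with y hy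
  have hyx : y * x⁻¹ ≠ 1 := mul_inv_eq_one.not.2 hy
  rw [(hasSum_mul_iff_of_finite_support hfin).1 (hasSum_mul_martinKernel hfin htrans x y),
    convPow_zero_of_ne_one hyx, zero_div, sub_zero]

theorem exists_tendsto_martinKernel (hμ : ∀ x, 0 ≤ μ x)
    (hfin : (Function.support μ).Finite) (hgen : IsGenerating μ) (htrans : IsTransient μ)
    (U : Ultrafilter Γ) :
    ∃ f, f 1 = 1 ∧ Tendsto (fun y x => martinKernel μ x y) U (𝓝 f) := by
  have hmem (y : Γ) : (fun x => martinKernel μ x y) ∈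
      {f | IsNonnegSuperharmonic μ f ∧ f 1 = 1} :=
    ⟨isNonnegSuperharmonic_martinKernel hμ hfin htrans y, by
      simp only [martinKernel, inv_one, mul_one, div_self (greenFn_pos hμ hgen htrans y).ne']⟩
  obtain ⟨f, ⟨-, hf1⟩, hlim⟩ :=
    (isCompact_setOf_isNonnegSuperharmonic_one hμ hgen).ultrafilter_le_nhds
      (U.map fun y x => martinKernel μ x y)
      (le_principal_iff.2 (Filter.mem_map.2 (Filter.univ_mem' hmem)))
  exact ⟨f, hf1, hlim⟩

theorem tendsto_greenFn_mul_div_greenFn {N : Subgroup Γ} [N.Normal] [Finite N]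
    (hμ : ∀ x, 0 ≤ μ x) (hfin : (Function.support μ).Finite) (hgen : IsGenerating μ)
    (htrans : IsTransient μ) {g : Γ} (hg : g ∈ N) :
    Tendsto (fun y => greenFn μ (y * g) / greenFn μ y) cofinite (𝓝 1) := by
  rw [tendsto_iff_ultrafilter]
  intro U hU
  obtain ⟨f, hf1, hlim⟩ := exists_tendsto_martinKernel hμ hfin hgen htrans U
  have hf : IsNonnegHarmonic μ f :=
    isNonnegHarmonic_of_tendsto_martinKernel hμ hfin htrans hU hlim
  have hfg : f g⁻¹ = 1 := by
    simpa only [one_mul, hf1] using hf.apply_mul_mem hμ hfin hgen 1 (N.inv_mem hg)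
  simpa only [martinKernel, inv_inv, hfg] using tendsto_pi_nhds.1 hlim g⁻¹

theorem green_ratio_tendsto_card_general (N : Subgroup Γ) [N.Normal] [Finite N]
    (hμ : ∀ x, 0 ≤ μ x) (hfin : (Function.support μ).Finite) (hgen : IsGenerating μ)
    (htrans : IsTransient μ) :
    Tendsto (fun y : Γ => ∑' g : N, greenFn μ (y * (g : Γ)) / greenFn μ y)
      cofinite (𝓝 (Nat.card N : ℝ)) := by
  have := Fintype.ofFinite N
  have hcard : (Nat.card N : ℝ) = ∑ _g : N, (1 : ℝ) := by
    simp only [Nat.card_eq_fintype_card, Finset.sum_const, Finset.card_univ, nsmul_eq_mul, mul_one]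
  simp_rw [tsum_fintype, hcard]
  exact tendsto_finsetSum _ fun g _ => tendsto_greenFn_mul_div_greenFn hμ hfin hgen htrans g.2

end

/-- For a finitely supported, generating, transient probability measure `μ` on
a countable group `Γ` with finite normal subgroup `N` of cardinality `n`, the
function `y ↦ ∑_{g ∈ N} G(y g) / G(y)` tends to `n` along the cofinite
filter on `Γ`. -/
theorem green_ratio_tendsto_card
    {Γ : Type*} [Group Γ] [Countable Γ]
    (N : Subgroup Γ) [N.Normal] [Finite N]
    (μ : Γ → ℝ) (hμ0 : ∀ x, 0 ≤ μ x) (hμ1 : HasSum μ 1)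
    (hfin : (Function.support μ).Finite)
    (hgen : IsGenerating μ) (htrans : IsTransient μ) :
    Filter.Tendsto (fun y : Γ => ∑' g : N, greenFn μ (y * (g : Γ)) / greenFn μ y)
      Filter.cofinite (nhds (Nat.card N : ℝ)) := by
  exact green_ratio_tendsto_card_general N hμ0 hfin hgen htrans
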